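/- Let X be an M-adhesive category and suppose two direct derivations apply the same left M-linear rule ρ = (l : K → L, r : K → R) to the same object G with the same match m : L → G, yielding data (k : K → D, f : D → G, g : D → H, h : R → H) and (k' : K → D', f' : D' → G, g' : D' → H', h' : R → H'). Then there exist isomorphisms φ_D : D → D' and φ_H : H → H' such that f'∘φ_D = f, φ_D∘k = k', g'∘φ_D = φ_H∘g and φ_H∘h = h'. -/

import Mathlib

/-!
The complement `D` of a pushout along an arrow of `M` is unique as a subobject of `G`.
Given two complements `f : D ⟶ G` and `f' : D' ⟶ G`, pull the first pushout square back along
`f'`. Its corner `L` becomes `K`, because the second pushout square is also a pullback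
(`IsMAdhesive.isPullback_of_isPushout`), and its corner `K` stays `K`, because `l` is a
monomorphism. The Van Kampen property makes the resulting square, one of whose sides is the
identity of `K`, a pushout, so the projection of `D' ×[G] D` to `D'` is invertible and `f'` factors
through `f` (`IsMAdhesive.exists_factor_of_complements`). By symmetry `D` and `D'` are isomorphic
over `G`; the isomorphism respects the arrows from `K` because `f` and `f'` are monomorphisms.
The objects `H` and `H'` are then pushouts of isomorphic spans.
-/

open CategoryTheory CategoryTheory.Limits

universe w v u

variable {C : Type u} [Category.{v} C]

/-- A commutative square (a pushout square) is an `A`-Van Kampen square if for every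
commutative cube having it as bottom face, whose back and left faces are pullbacks and
whose four vertical arrows lie in `A`, the top face is a pushout if and only if the front
and right faces are pullbacks.  The square has top side `f`, left side `m`, right side `n`
and bottom side `g`. -/
def IsVanKampenSquareFor (A : MorphismProperty C) {X₁ X₂ X₃ X₄ : C}
    (f : X₁ ⟶ X₂) (m : X₁ ⟶ X₃) (n : X₂ ⟶ X₄) (g : X₃ ⟶ X₄) : Prop :=
  IsPushout f m n g ∧
  ∀ ⦃Y₁ Y₂ Y₃ Y₄ : C⦄ (f' : Y₁ ⟶ Y₂) (m' : Y₁ ⟶ Y₃) (n' : Y₂ ⟶ Y₄) (g' : Y₃ ⟶ Y₄)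
    (a : Y₁ ⟶ X₁) (b : Y₂ ⟶ X₂) (c : Y₃ ⟶ X₃) (d : Y₄ ⟶ X₄),
    f' ≫ n' = m' ≫ g' → g' ≫ d = c ≫ g → n' ≫ d = b ≫ n →
    IsPullback f' a b f → IsPullback m' a c m →
    A a → A b → A c → A d →
    (IsPushout f' m' n' g' ↔ (IsPullback g' c d g ∧ IsPullback n' b d n))

/-- An `M`-adhesive category: `M` is a class of monomorphisms containing all isomorphisms,
closed under composition, stable under pullbacks and pushouts; the category has pullbacks
and pushouts along arrows of `M`, and pushouts along arrows of `M` are `M`-Van Kampen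
squares. -/
structure IsMAdhesive (M : MorphismProperty C) : Prop where
  mono : ∀ ⦃X Y : C⦄ (f : X ⟶ Y), M f → Mono f
  contains_iso : ∀ ⦃X Y : C⦄ (f : X ⟶ Y), IsIso f → M f
  comp_mem : ∀ ⦃X Y Z : C⦄ (f : X ⟶ Y) (g : Y ⟶ Z), M f → M g → M (f ≫ g)
  pullback_stable : ∀ ⦃W X Y Z : C⦄ (f : W ⟶ X) (m : W ⟶ Y) (n : X ⟶ Z) (g : Y ⟶ Z),
    IsPullback f m n g → M n → M m
  pushout_stable : ∀ ⦃W X Y Z : C⦄ (f : W ⟶ X) (m : W ⟶ Y) (n : X ⟶ Z) (g : Y ⟶ Z),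
    IsPushout f m n g → M m → M n
  has_pullback : ∀ ⦃X Y Z : C⦄ (f : X ⟶ Z) (m : Y ⟶ Z), M m → HasPullback f m
  has_pushout : ∀ ⦃X Y Z : C⦄ (m : X ⟶ Y) (f : X ⟶ Z), M m → HasPushout m f
  van_kampen : ∀ ⦃W X Y Z : C⦄ (f : W ⟶ X) (m : W ⟶ Y) (n : X ⟶ Z) (g : Y ⟶ Z),
    IsPushout f m n g → M m → IsVanKampenSquareFor M f m n g

/-- The Van Kampen property is applied to the cube whose top face is the trivial pushout of `f`
along the identity; the original square is then one of its front faces. -/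
lemma IsMAdhesive.isPullback_of_isPushout {M : MorphismProperty C} (hadh : IsMAdhesive M)
    {W X Y Z : C} {f : W ⟶ X} {m : W ⟶ Y} {n : X ⟶ Z} {g : Y ⟶ Z}
    (h : IsPushout f m n g) (hm : M m) : IsPullback f m n g := by
  have : Mono m := hadh.mono m hm
  exact (((hadh.van_kampen f m n g h hm).2 f (𝟙 W) (𝟙 X) f (𝟙 W) (𝟙 X) m n
    (by simp) h.w rfl (IsPullback.of_vert_isIso ⟨by simp⟩) (IsKernelPair.id_of_mono m)
    (hadh.contains_iso _ inferInstance) (hadh.contains_iso _ inferInstance) hm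
    (hadh.pushout_stable f m n g h hm)).1 (IsPushout.of_vert_isIso ⟨by simp⟩)).1

/-- Any pushout complement of `(l, m)` in `M` is contained, as a subobject of `G`, in any other. -/
lemma IsMAdhesive.exists_factor_of_complements {M : MorphismProperty C} (hadh : IsMAdhesive M)
    {K L G D D' : C} {l : K ⟶ L} {m : L ⟶ G} {k : K ⟶ D} {f : D ⟶ G} {k' : K ⟶ D'} {f' : D' ⟶ G}
    (hl : M l) (hf : M f) (hf' : M f')
    (h : IsPushout l k m f) (h' : IsPushout l k' m f') :
    ∃ j : D' ⟶ D, j ≫ f = f' := by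
  have : Mono l := hadh.mono l hl
  have : HasPullback f' f := hadh.has_pullback f' f hf
  have hP := IsPullback.of_hasPullback f' f
  have hp₂ : M (pullback.snd f' f) := hadh.pullback_stable _ _ _ _ hP hf'
  have : Mono (pullback.snd f' f) := hadh.mono _ hp₂
  let t : K ⟶ pullback f' f := pullback.lift k' k (by rw [← h.w, ← h'.w])
  have ht₁ : t ≫ pullback.fst f' f = k' := pullback.lift_fst _ _ _
  have ht₂ : t ≫ pullback.snd f' f = k := pullback.lift_snd _ _ _
  have hback : IsPullback t (𝟙 K) (pullback.snd f' f) k := by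
    refine ⟨⟨by simp [ht₂]⟩, ⟨PullbackCone.IsLimit.mk _ (fun s => s.snd) (fun s => ?_)
      (fun s => by simp) (fun s u _ hu => by simpa using hu)⟩⟩
    rw [← cancel_mono (pullback.snd f' f), Category.assoc, ht₂, s.condition]
  have htop : IsPushout t (𝟙 K) (pullback.fst f' f) k' :=
    ((hadh.van_kampen k l f m h.flip hl).2 t (𝟙 K) (pullback.fst f' f) k'
      (𝟙 K) (pullback.snd f' f) l f' (by simp [ht₁]) h'.w.symm hP.w
      hback (IsKernelPair.id_of_mono l)
      (hadh.contains_iso _ inferInstance) hp₂ hl hf').2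
      ⟨hadh.isPullback_of_isPushout h'.flip hl, hP⟩
  have : IsIso (pullback.fst f' f) := htop.isIso_inl_of_isIso
  exact ⟨inv (pullback.fst f' f) ≫ pullback.snd f' f, by simp [← hP.w]⟩

/-- Uniqueness of the result of a direct derivation.  If two direct derivations apply the
same left `M`-linear rule `(l : K ⟶ L, r : K ⟶ R)` (with `l ∈ M`) to the same object `G`
with the same match `m : L ⟶ G`, then there are isomorphisms `φD : D ⟶ D'` and
`φH : H ⟶ H'` commuting with all the data (and the identity on `G`). -/
theorem direct_derivation_unique
    (M : MorphismProperty C) (hadh : IsMAdhesive M)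
    {K L R G D D' H H' : C}
    (l : K ⟶ L) (r : K ⟶ R) (hl : M l)
    (m : L ⟶ G)
    (k : K ⟶ D) (f : D ⟶ G) (g : D ⟶ H) (h : R ⟶ H)
    (k' : K ⟶ D') (f' : D' ⟶ G) (g' : D' ⟶ H') (h' : R ⟶ H')
    (hf : M f) (hf' : M f')
    (hleft : IsPushout l k m f) (hright : IsPushout r k h g)
    (hleft' : IsPushout l k' m f') (hright' : IsPushout r k' h' g') :
    ∃ (φD : D ⟶ D') (φH : H ⟶ H'),
      IsIso φD ∧ IsIso φH ∧
      φD ≫ f' = f ∧ k ≫ φD = k' ∧ φD ≫ g' = g ≫ φH ∧ h ≫ φH = h' := by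
  have : Mono f := hadh.mono f hf
  have : Mono f' := hadh.mono f' hf'
  obtain ⟨i, hi⟩ := hadh.exists_factor_of_complements hl hf' hf hleft' hleft
  obtain ⟨j, hj⟩ := hadh.exists_factor_of_complements hl hf hf' hleft hleft'
  have hki : k ≫ i = k' := by
    rw [← cancel_mono f', Category.assoc, hi, ← hleft.w, hleft'.w]
  have hij : i ≫ j = 𝟙 D := by rw [← cancel_mono f]; simp [hi, hj]
  have hji : j ≫ i = 𝟙 D' := by rw [← cancel_mono f']; simp [hi, hj]
  let e : D ≅ D' := ⟨i, j, hij, hji⟩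
  -- Reindexing along `e` makes `H'` a pushout of the same span as `H`.
  have hH : IsPushout r k h' (i ≫ g') :=
    hright'.of_iso (Iso.refl _) (Iso.refl _) e.symm (Iso.refl _)
      (by simp) (by rw [← hki]; simp [e, hij]) (by simp) (by change g' ≫ 𝟙 H' = j ≫ i ≫ g'; rw [← Category.assoc, hji]; simp)
  let φ := hright.isoIsPushout _ _ hH
  exact ⟨i, φ.hom, ⟨j, hij, hji⟩, inferInstance, hi, hki,
    (hright.inr_isoIsPushout_hom _ _ hH).symm, hright.inl_isoIsPushout_hom _ _ hH⟩
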